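/- arXiv:2509.17795 — 2 statements merged into one kernel-verified Lean document; each statement's English description precedes it below -/
import Mathlib

section
/- For every natural number n ≥ 2 there exists a matched differentiated history h with exactly n distinct values and no pop(⊥) operations such that h is not linearizable with respect to the sequential stack specification, but for every value x of h, the history obtained by removing both operations on x from h is linearizable. In other words, stack linearizability has no small model property: unlinearizability cannot always be witnessed by a bounded-size sub-history. -/
attribute [local instance] Classical.propDecidable

/-- A stack label: `push x`, `pop (some x)`, or `pop none` (= pop(⊥), popping empty). -/
inductive Label where
  | push : ℕ → Label
  | pop  : Option ℕ → Label
  deriving DecidableEq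

/-- The value carried by a label (`none` for pop(⊥)). -/
def Label.val : Label → Option ℕ
  | .push x => some x
  | .pop v  => v

/-- The set of values occurring in a sequence of labels. -/
def seqVals (u : List Label) : Set ℕ :=
  {x | Label.push x ∈ u ∨ Label.pop (some x) ∈ u}

/-- A label sequence is matched if every pushed value is also popped. -/
def seqMatched (u : List Label) : Prop :=
  ∀ x : ℕ, Label.push x ∈ u → Label.pop (some x) ∈ u

/-- The sequential stack specification, as the least set of label sequences closed
under the rules Rε, R_PushPop, R_Push, R_PopEmpty. -/
inductive Stack : List Label → Prop
  | empty : Stack []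
  | pushPop (x : ℕ) (u v : List Label) :
      Stack (u ++ v) → Disjoint (seqVals u) (seqVals v) → seqMatched u →
      x ∉ seqVals u → x ∉ seqVals v →
      Stack (Label.push x :: (u ++ Label.pop (some x) :: v))
  | push (x : ℕ) (u v : List Label) :
      Stack (u ++ v) → Disjoint (seqVals u) (seqVals v) →
      Label.pop none ∉ v → x ∉ seqVals u → x ∉ seqVals v →
      Stack (u ++ Label.push x :: v)
  | popEmpty (u v : List Label) :
      Stack (u ++ v) → seqMatched u →
      Stack (u ++ Label.pop none :: v)

/-- An operation: a label with a call time and a return time, with call < return. -/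
structure Op where
  label : Label
  call : ℝ
  ret : ℝ
  call_lt_ret : call < ret

/-- The value of an operation. -/
def Op.val (o : Op) : Option ℕ := o.label.val

/-- A history (finite set of operations) is differentiated: each value is pushed by at
most one operation and popped by at most one operation. -/
def Differentiated (h : Finset Op) : Prop :=
  (∀ o1 ∈ h, ∀ o2 ∈ h, ∀ x : ℕ,
      o1.label = Label.push x → o2.label = Label.push x → o1 = o2) ∧
  (∀ o1 ∈ h, ∀ o2 ∈ h, ∀ x : ℕ,
      o1.label = Label.pop (some x) → o2.label = Label.pop (some x) → o1 = o2)

/-- The set of values occurring in a history. -/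
def hVals (h : Finset Op) : Set ℕ :=
  {x | ∃ o ∈ h, o.label = Label.push x ∨ o.label = Label.pop (some x)}

/-- A history is matched if every pushed value is also popped. -/
def HMatched (h : Finset Op) : Prop :=
  ∀ x : ℕ, (∃ o ∈ h, o.label = Label.push x) → ∃ o ∈ h, o.label = Label.pop (some x)

/-- A history has no pop(⊥) operations. -/
def NoPopEmpty (h : Finset Op) : Prop :=
  ∀ o ∈ h, o.label ≠ Label.pop none

/-- `ℓ` is a linearization of the history `h`: it lists (the operations of) `h`
exactly once each, respects precedence (`o1` precedes `o2` iff `o1.ret < o2.call`),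
and its label sequence is in the sequential stack specification. -/
def IsLinearization (h : Finset Op) (ℓ : List Op) : Prop :=
  ℓ.Nodup ∧ (∀ o : Op, o ∈ ℓ ↔ o ∈ h) ∧
  ℓ.Pairwise (fun o1 o2 => ¬ o2.ret < o1.call) ∧
  Stack (ℓ.map Op.label)

/-- A history is linearizable if it admits a linearization. -/
def Linearizable (h : Finset Op) : Prop := ∃ ℓ : List Op, IsLinearization h ℓ

/-- Projection of a history onto a set of (possibly-⊥) values. -/
noncomputable def projOpt (h : Finset Op) (V : Set (Option ℕ)) : Finset Op :=
  h.filter (fun o => o.val ∈ V)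

/-- Projection of a history onto a set of proper values. -/
noncomputable def projVal (h : Finset Op) (V : Set ℕ) : Finset Op :=
  h.filter (fun o => ∃ x ∈ V, o.val = some x)

/-- The history with all operations on value `x` removed. -/
noncomputable def removeVal (h : Finset Op) (x : ℕ) : Finset Op :=
  h.filter (fun o => o.val ≠ some x)

/-- A time point is covered if it lies in the I-segment [push(x).ret, pop(x).call]
of some value `x`. -/
def Covered (h : Finset Op) (t : ℝ) : Prop :=
  ∃ p ∈ h, ∃ q ∈ h, ∃ x : ℕ, p.label = Label.push x ∧ q.label = Label.pop (some x) ∧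
    p.ret ≤ t ∧ t ≤ q.call

/-- A P-segment: a maximal (nonempty) interval of covered points. -/
def IsPSegment (h : Finset Op) (S : Set ℝ) : Prop :=
  S.Nonempty ∧ S.OrdConnected ∧ (∀ t ∈ S, Covered h t) ∧
  ∀ T : Set ℝ, S ⊆ T → T.OrdConnected → (∀ t ∈ T, Covered h t) → T = S

/-- A D-segment (opening): a maximal (nonempty) interval of uncovered points. -/
def IsDSegment (h : Finset Op) (S : Set ℝ) : Prop :=
  S.Nonempty ∧ S.OrdConnected ∧ (∀ t ∈ S, ¬ Covered h t) ∧
  ∀ T : Set ℝ, S ⊆ T → T.OrdConnected → (∀ t ∈ T, ¬ Covered h t) → T = S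

/-- An inner (internal) D-segment: a D-segment with a P-segment before it and a
P-segment after it. -/
def InnerDSegment (h : Finset Op) (ξ : Set ℝ) : Prop :=
  IsDSegment h ξ ∧
  (∃ S : Set ℝ, IsPSegment h S ∧ ∀ s ∈ S, ∀ t ∈ ξ, s < t) ∧
  (∃ S : Set ℝ, IsPSegment h S ∧ ∀ s ∈ S, ∀ t ∈ ξ, t < s)

/-- `x` is minimal in `h`: `x` is pushed in `h` and no push of `h` returns before
`push(x)` is called. -/
def MinimalVal (h : Finset Op) (x : ℕ) : Prop :=
  ∃ px ∈ h, px.label = Label.push x ∧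
    ∀ p ∈ h, (∃ y : ℕ, p.label = Label.push y) → ¬ p.ret < px.call

/-- `x` is maximal in `h`: `x` is popped in `h` and no pop of `h` is called after
`pop(x)` returns. -/
def MaximalVal (h : Finset Op) (x : ℕ) : Prop :=
  ∃ qx ∈ h, qx.label = Label.pop (some x) ∧
    ∀ q ∈ h, (∃ v : Option ℕ, q.label = Label.pop v) → ¬ qx.ret < q.call

/-- A separation of the values of `h` into `L` and `R`: a partition such that no
operation on a value of `R` precedes an operation on a value of `L`. -/
def Separation (h : Finset Op) (L R : Set ℕ) : Prop :=
  L ∪ R = hVals h ∧ Disjoint L R ∧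
  ∀ o1 ∈ h, ∀ o2 ∈ h, ∀ r ∈ R, ∀ l ∈ L,
    o1.val = some r → o2.val = some l → ¬ o1.ret < o2.call

/-- Values of `h` whose I-segment lies (entirely) before the D-segment `ξ`. -/
def segL (h : Finset Op) (ξ : Set ℝ) : Set ℕ :=
  {x | ∃ px ∈ h, ∃ qx ∈ h, px.label = Label.push x ∧ qx.label = Label.pop (some x) ∧
    ∀ t ∈ Set.Icc px.ret qx.call, ∀ s ∈ ξ, t < s}

/-- Values of `h` whose I-segment lies (entirely) after the D-segment `ξ`. -/
def segR (h : Finset Op) (ξ : Set ℝ) : Set ℕ :=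
  {x | ∃ px ∈ h, ∃ qx ∈ h, px.label = Label.push x ∧ qx.label = Label.pop (some x) ∧
    ∀ t ∈ Set.Icc px.ret qx.call, ∀ s ∈ ξ, s < t}

/-!
In a stack sequence the lifetimes of two values never cross: `push a`, `push b`, `pop a`, `pop b`
do not occur in this order. Give the values `0, …, k + 1` operations such that `push 0` precedes
`push (k + 1)`, every `pop i` with `i ≤ k` precedes `pop (k + 1)`, and `push (i + 1)` precedes
`pop i` for `i ≤ k`. In a linearization, each `i ≤ k` pushed before `k + 1` must then be popped
before `push (k + 1)`; hence `i + 1` is pushed before `k + 1` too, and the chain starting at `0`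
reaches `pop k` before `push (k + 1)`, a contradiction. Removing any value `x` breaks the chain:
the values below `x`, and then those above `x`, can each be executed as one nested block.
-/

section Lists

variable {α : Type*} {s t u v w l : List α} {a : α}

theorem sublist_append_of_sublist_append_cons (ha : a ∉ w) (h : w.Sublist (u ++ a :: v)) :
    w.Sublist (u ++ v) := by
  obtain ⟨w₁, w₂, rfl, h₁, h₂⟩ := List.sublist_append_iff.mp h
  refine h₁.append ?_
  cases h₂ with
  | cons _ h₂ => exact h₂
  | cons_cons _ _ => simp at ha

theorem sublist_of_append_cons_sublist_append_cons (hu : a ∉ u) (hv : a ∉ v)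
    (h : (s ++ a :: t).Sublist (u ++ a :: v)) : s.Sublist u ∧ t.Sublist v := by
  obtain ⟨w₁, w₂, hw, h₁, h₂⟩ := List.sublist_append_iff.mp h
  obtain ⟨r, rfl, hr⟩ | ⟨r, rfl, hr⟩ := List.append_eq_append_iff.mp hw
  · cases r with
    | nil =>
      obtain rfl : a :: t = w₂ := by simpa using hr
      exact ⟨by simpa using h₁, List.cons_sublist_cons.mp h₂⟩
    | cons b r =>
      obtain rfl : a = b := (List.cons.inj hr).1
      exact absurd (h₁.subset (by simp)) hu
  · subst hr
    cases r with
    | nil => exact ⟨by simpa using h₁, List.cons_sublist_cons.mp h₂⟩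
    | cons b r =>
      have ht : (a :: t).Sublist v := (List.sublist_append_right r _).trans h₂.tail
      exact absurd (ht.subset (by simp)) hv

theorem sublist_of_pairwise_idxOf_lt [DecidableEq α] (hs : s ⊆ l)
    (h : s.Pairwise (l.idxOf · < l.idxOf ·)) : s.Sublist l := by
  have hlt (a : α) (ha : a ∈ s) : l.idxOf a < l.length := List.idxOf_lt_length_of_mem (hs ha)
  have hsorted : (s.pmap (fun a ha => (⟨l.idxOf a, ha⟩ : Fin l.length)) hlt).Pairwise (· < ·) :=
    h.pmap hlt fun _ _ _ _ hab => hab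
  simpa [List.map_pmap] using List.map_getElem_sublist hsorted

end Lists

section Stack

theorem seqVals_append (u v : List Label) : seqVals (u ++ v) = seqVals u ∪ seqVals v := by
  ext x
  simp only [seqVals, List.mem_append, Set.mem_ofPred_eq, Set.mem_union]
  tauto

theorem seqVals_cons_push (x : ℕ) (u : List Label) :
    seqVals (Label.push x :: u) = insert x (seqVals u) := by
  ext y
  simp [seqVals, or_assoc]

theorem seqVals_cons_pop_some (x : ℕ) (u : List Label) :
    seqVals (Label.pop (some x) :: u) = insert x (seqVals u) := by
  ext y
  simp [seqVals, or_left_comm]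

theorem seqVals_cons_pop_none (u : List Label) :
    seqVals (Label.pop none :: u) = seqVals u := by
  simp [seqVals]

theorem Stack.not_crossing {l : List Label} (hl : Stack l) (a b : ℕ) :
    ¬ [Label.push a, Label.push b, Label.pop (some a), Label.pop (some b)].Sublist l := by
  induction hl with
  | empty => simp
  | pushPop x u v _ hdisj _ hu hv ih =>
    intro h
    simp only [seqVals, Set.mem_ofPred_eq, not_or] at hu hv
    rcases eq_or_ne a x with rfl | hax
    · have hsplit : [Label.push b].Sublist u ∧ [Label.pop (some b)].Sublist v :=
        sublist_of_append_cons_sublist_append_cons hu.2 hv.2 (List.cons_sublist_cons.mp h)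
      simp only [List.singleton_sublist] at hsplit
      exact Set.disjoint_left.mp hdisj (Or.inl hsplit.1) (Or.inr hsplit.2)
    · have hbx : b ≠ x := by
        rintro rfl
        obtain h | ⟨hab, _⟩ := List.cons_sublist_cons'.mp h
        · have hpush : Label.push b ∈ u ++ Label.pop (some b) :: v := h.subset (by simp)
          simp_all
        · exact hax (Label.push.inj hab)
      have hw := sublist_append_of_sublist_append_cons (u := []) (by simp [hax.symm, hbx.symm]) h
      exact ih (sublist_append_of_sublist_append_cons (by simp [hax.symm, hbx.symm]) hw)
  | push x u v _ _ _ hu hv ih =>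
    intro h
    simp only [seqVals, Set.mem_ofPred_eq, not_or] at hu hv
    refine ih (sublist_append_of_sublist_append_cons ?_ h)
    have hpops (y : ℕ) (hy : y = a ∨ y = b) : Label.pop (some y) ∈ u ++ Label.push x :: v :=
      h.subset (by rcases hy with rfl | rfl <;> simp)
    have hx (y : ℕ) (hy : y = a ∨ y = b) : x ≠ y := by
      rintro rfl
      simpa [hu, hv] using hpops x hy
    simp [hx]
  | popEmpty u v _ _ ih =>
    exact fun h => ih (sublist_append_of_sublist_append_cons (by simp) h)

theorem Stack.append {u v : List Label} (hu : Stack u) (hv : Stack v) (hmatched : seqMatched u)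
    (hdisj : Disjoint (seqVals u) (seqVals v)) : Stack (u ++ v) := by
  induction hu with
  | empty => exact hv
  | pushPop x u₁ u₂ _ hdisj₁₂ hu₁ hx₁ hx₂ ih =>
    simp only [seqVals_cons_push, seqVals_append, seqVals_cons_pop_some, Set.union_insert,
      Set.insert_idem, Set.disjoint_insert_left, Set.disjoint_union_left] at hdisj
    have hmatched' : seqMatched (u₁ ++ u₂) := by
      intro y hy
      have hyx : y ≠ x := by
        rintro rfl
        exact (List.mem_append.mp hy).elim (hx₁ <| Or.inl ·) (hx₂ <| Or.inl ·)
      simpa [hyx] using hmatched y (by simp_all)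
    have hstack : Stack (u₁ ++ (u₂ ++ v)) := by
      simpa using ih hmatched' (by simpa [seqVals_append] using hdisj.2)
    simpa using hstack.pushPop x u₁ (u₂ ++ v) (by simp [seqVals_append, *]) hu₁ hx₁
      (by simp [seqVals_append, *])
  | push x u₁ u₂ _ _ _ hx₁ hx₂ _ =>
    have hpop : Label.pop (some x) ∈ u₁ ++ u₂ := by simpa using hmatched x (by simp)
    exact ((List.mem_append.mp hpop).elim (hx₁ <| Or.inr ·) (hx₂ <| Or.inr ·)).elim
  | popEmpty u₁ u₂ _ hu₁ ih =>
    have hmatched' : seqMatched (u₁ ++ u₂) := fun y hy => by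
      simpa using hmatched y (by simpa using hy)
    have hstack : Stack (u₁ ++ (u₂ ++ v)) := by
      simpa using ih hmatched' (by simpa [seqVals_append, seqVals_cons_pop_none] using hdisj)
    simpa using hstack.popEmpty u₁ (u₂ ++ v) hu₁

end Stack

section Linearization

variable {h h₁ h₂ : Finset Op} {ℓ ℓ₁ ℓ₂ : List Op}

namespace IsLinearization

theorem idxOf_lt_idxOf (hℓ : IsLinearization h ℓ) {o₁ o₂ : Op} (ho₁ : o₁ ∈ h) (ho₂ : o₂ ∈ h)
    (hprec : o₁.ret < o₂.call) : ℓ.idxOf o₁ < ℓ.idxOf o₂ := by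
  obtain ⟨-, hmem, hpairwise, -⟩ := hℓ
  have hℓ₁ := (hmem o₁).mpr ho₁
  have hℓ₂ := (hmem o₂).mpr ho₂
  by_contra! hle
  rcases hle.lt_or_eq with hlt | heq
  · have := List.pairwise_iff_getElem.mp hpairwise _ _ (List.idxOf_lt_length_of_mem hℓ₂)
      (List.idxOf_lt_length_of_mem hℓ₁) hlt
    simp only [List.getElem_idxOf] at this
    exact this hprec
  · obtain rfl := (List.idxOf_inj hℓ₂).mp heq
    exact o₂.call_lt_ret.not_gt hprec

theorem idxOf_pop_lt_idxOf_push (hℓ : IsLinearization h ℓ) {a b : ℕ} {pa pb qa qb : Op}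
    (hpa : pa ∈ h) (hpb : pb ∈ h) (hqa : qa ∈ h) (hqb : qb ∈ h)
    (hpa_label : pa.label = Label.push a) (hpb_label : pb.label = Label.push b)
    (hqa_label : qa.label = Label.pop (some a)) (hqb_label : qb.label = Label.pop (some b))
    (hpush : ℓ.idxOf pa < ℓ.idxOf pb) (hpop : ℓ.idxOf qa < ℓ.idxOf qb) :
    ℓ.idxOf qa < ℓ.idxOf pb := by
  obtain ⟨-, hmem, -, hstack⟩ := hℓ
  by_contra! hle
  have hlt : ℓ.idxOf pb < ℓ.idxOf qa := by
    refine hle.lt_of_ne fun heq => ?_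
    obtain rfl := (List.idxOf_inj ((hmem pb).mpr hpb)).mp heq
    simp [hpb_label] at hqa_label
  have hcrossing : [pa, pb, qa, qb].Sublist ℓ := by
    refine sublist_of_pairwise_idxOf_lt (by simp [*]) ?_
    simp only [List.pairwise_cons, List.mem_cons]
    grind
  exact hstack.not_crossing a b (by simpa [*] using hcrossing.map Op.label)

theorem seqVals_map_label (hℓ : IsLinearization h ℓ) : seqVals (ℓ.map Op.label) = hVals h := by
  ext x
  simp only [seqVals, hVals, List.mem_map, hℓ.2.1, Set.mem_ofPred_eq]
  grind

theorem union (hℓ₁ : IsLinearization h₁ ℓ₁) (hℓ₂ : IsLinearization h₂ ℓ₂) (hmatched : HMatched h₁)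
    (hdisj : Disjoint h₁ h₂) (hvals : Disjoint (hVals h₁) (hVals h₂))
    (hprec : ∀ o₁ ∈ h₁, ∀ o₂ ∈ h₂, ¬ o₂.ret < o₁.call) :
    IsLinearization (h₁ ∪ h₂) (ℓ₁ ++ ℓ₂) := by
  have hseqMatched : seqMatched (ℓ₁.map Op.label) := by
    intro x
    simpa [hℓ₁.2.1] using hmatched x
  have hstack : Stack (ℓ₁.map Op.label ++ ℓ₂.map Op.label) :=
    hℓ₁.2.2.2.append hℓ₂.2.2.2 hseqMatched
      (by rwa [hℓ₁.seqVals_map_label, hℓ₂.seqVals_map_label])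
  obtain ⟨hnodup₁, hmem₁, hpairwise₁, -⟩ := hℓ₁
  obtain ⟨hnodup₂, hmem₂, hpairwise₂, -⟩ := hℓ₂
  refine ⟨hnodup₁.append hnodup₂ fun o ho₁ ho₂ => ?_, fun o => ?_,
    List.pairwise_append.mpr ⟨hpairwise₁, hpairwise₂, fun o₁ ho₁ o₂ ho₂ => ?_⟩, ?_⟩
  · exact Finset.disjoint_left.mp hdisj ((hmem₁ o).mp ho₁) ((hmem₂ o).mp ho₂)
  · simp [hmem₁, hmem₂]
  · exact hprec o₁ ((hmem₁ o₁).mp ho₁) o₂ ((hmem₂ o₂).mp ho₂)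
  · rwa [List.map_append]

end IsLinearization

end Linearization

/-- A choice of one push and one pop operation for every value, from which matched differentiated
histories are cut out by finite sets of values (`OpFamily.history`). -/
structure OpFamily where
  push : ℕ → Op
  pop : ℕ → Op
  label_push : ∀ i, (push i).label = Label.push i
  label_pop : ∀ i, (pop i).label = Label.pop (some i)

namespace OpFamily

attribute [simp] label_push label_pop

variable (F : OpFamily) {V W : Finset ℕ}

/-- The history consisting of the push and the pop of each value in `V`. -/
noncomputable def history (V : Finset ℕ) : Finset Op :=
  V.image F.push ∪ V.image F.pop

variable {F}

theorem mem_history {o : Op} : o ∈ F.history V ↔ ∃ i ∈ V, o = F.push i ∨ o = F.pop i := by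
  simp only [history, Finset.mem_union, Finset.mem_image]
  grind

theorem push_mem_history {i : ℕ} (hi : i ∈ V) : F.push i ∈ F.history V :=
  mem_history.mpr ⟨i, hi, Or.inl rfl⟩

theorem pop_mem_history {i : ℕ} (hi : i ∈ V) : F.pop i ∈ F.history V :=
  mem_history.mpr ⟨i, hi, Or.inr rfl⟩

theorem val_push (i : ℕ) : (F.push i).val = some i := by
  simp [Op.val, Label.val]

theorem val_pop (i : ℕ) : (F.pop i).val = some i := by
  simp [Op.val, Label.val]

theorem exists_val_eq_some_of_mem_history {o : Op} (ho : o ∈ F.history V) :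
    ∃ i ∈ V, o.val = some i := by
  obtain ⟨i, hi, rfl | rfl⟩ := mem_history.mp ho
  exacts [⟨i, hi, val_push i⟩, ⟨i, hi, val_pop i⟩]

theorem differentiated_history : Differentiated (F.history V) := by
  constructor
  all_goals
    intro o₁ ho₁ o₂ ho₂ x hx₁ hx₂
    obtain ⟨i, -, rfl | rfl⟩ := mem_history.mp ho₁ <;>
    obtain ⟨j, -, rfl | rfl⟩ := mem_history.mp ho₂ <;>
    simp_all

theorem hMatched_history : HMatched (F.history V) := by
  rintro x ⟨o, ho, hx⟩
  obtain ⟨i, hi, rfl | rfl⟩ := mem_history.mp ho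
  · obtain rfl : i = x := by simpa using hx
    exact ⟨F.pop i, pop_mem_history hi, F.label_pop i⟩
  · simp at hx

theorem noPopEmpty_history : NoPopEmpty (F.history V) := by
  intro o ho
  obtain ⟨i, -, rfl | rfl⟩ := mem_history.mp ho <;> simp

theorem hVals_history : hVals (F.history V) = V := by
  ext x
  constructor
  · rintro ⟨o, ho, hx⟩
    obtain ⟨i, hi, rfl | rfl⟩ := mem_history.mp ho <;> simp_all
  · exact fun hx => ⟨F.push x, push_mem_history hx, Or.inl (F.label_push x)⟩

theorem history_union : F.history (V ∪ W) = F.history V ∪ F.history W := by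
  ext o
  simp only [mem_history, Finset.mem_union]
  grind

theorem removeVal_history (x : ℕ) : removeVal (F.history V) x = F.history (V.erase x) := by
  ext o
  simp only [removeVal, Finset.mem_filter, mem_history, Finset.mem_erase]
  constructor
  · rintro ⟨⟨i, hi, rfl | rfl⟩, hx⟩ <;> exact ⟨i, by simp_all [val_push, val_pop]⟩
  · rintro ⟨i, ⟨hx, hi⟩, rfl | rfl⟩ <;> exact ⟨⟨i, hi, by simp⟩, by simp_all [val_push, val_pop]⟩

theorem disjoint_history (hVW : Disjoint V W) : Disjoint (F.history V) (F.history W) := by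
  refine Finset.disjoint_left.mpr fun o hV hW => ?_
  obtain ⟨i, hi, hoi⟩ := exists_val_eq_some_of_mem_history hV
  obtain ⟨j, hj, hoj⟩ := exists_val_eq_some_of_mem_history hW
  obtain rfl : i = j := Option.some.inj (hoi.symm.trans hoj)
  exact Finset.disjoint_left.mp hVW hi hj

theorem linearizable_history_union (hV : Linearizable (F.history V))
    (hW : Linearizable (F.history W)) (hVW : Disjoint V W)
    (hprec : ∀ o₁ ∈ F.history V, ∀ o₂ ∈ F.history W, ¬ o₂.ret < o₁.call) :
    Linearizable (F.history (V ∪ W)) := by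
  obtain ⟨ℓ₁, hℓ₁⟩ := hV
  obtain ⟨ℓ₂, hℓ₂⟩ := hW
  rw [history_union]
  exact ⟨ℓ₁ ++ ℓ₂, hℓ₁.union hℓ₂ hMatched_history (disjoint_history hVW)
    (by simpa [hVals_history] using hVW) hprec⟩

variable (F) in
/-- The nested execution of a list of values: all are pushed in order and then popped in reverse
order. -/
def nested (A : List ℕ) : List Op :=
  A.map F.push ++ A.reverse.map F.pop

theorem stack_map_label_nested {A : List ℕ} (hA : A.Nodup) :
    Stack ((F.nested A).map Op.label) := by
  induction A with
  | nil => exact Stack.empty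
  | cons a A ih =>
    obtain ⟨haA, hA⟩ := List.nodup_cons.mp hA
    have hmatched : seqMatched ((F.nested A).map Op.label) := by
      intro x
      simp [nested]
    have ha : a ∉ seqVals ((F.nested A).map Op.label) := by
      simpa [nested, seqVals] using haA
    have hstack := Stack.pushPop a ((F.nested A).map Op.label) [] (by simpa using ih hA)
      (by simp [seqVals]) hmatched ha (by simp [seqVals])
    simpa [nested] using hstack

theorem mem_nested {A : List ℕ} {o : Op} : o ∈ F.nested A ↔ o ∈ F.history A.toFinset := by
  simp only [nested, mem_history, List.mem_append, List.mem_map, List.mem_reverse,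
    List.mem_toFinset]
  grind

theorem push_injective : Function.Injective F.push := fun i j hij => by
  simpa using congrArg Op.label hij

theorem pop_injective : Function.Injective F.pop := fun i j hij => by
  simpa using congrArg Op.label hij

theorem nodup_nested {A : List ℕ} (hA : A.Nodup) : (F.nested A).Nodup := by
  refine (hA.map push_injective).append ((List.nodup_reverse.mpr hA).map pop_injective) ?_
  intro o hpush hpop
  obtain ⟨i, -, rfl⟩ := List.mem_map.mp hpush
  obtain ⟨j, -, hij⟩ := List.mem_map.mp hpop
  simpa using congrArg Op.label hij

theorem isLinearization_nested {A : List ℕ} (hA : A.Nodup)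
    (hpush : A.Pairwise fun a b => ¬ (F.push b).ret < (F.push a).call)
    (hpop : A.Pairwise fun a b => ¬ (F.pop a).ret < (F.pop b).call)
    (hpushPop : ∀ a ∈ A, ∀ b ∈ A, ¬ (F.pop b).ret < (F.push a).call) :
    IsLinearization (F.history A.toFinset) (F.nested A) := by
  refine ⟨nodup_nested hA, fun _ => mem_nested, ?_, stack_map_label_nested hA⟩
  refine List.pairwise_append.mpr ⟨hpush.map _ fun _ _ => id,
    (List.pairwise_reverse.mpr hpop).map _ fun _ _ => id, ?_⟩
  simpa using hpushPop

theorem not_linearizable_history_of_chain {k : ℕ} (hV : Finset.range (k + 2) ⊆ V)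
    (hpush : (F.push 0).ret < (F.push (k + 1)).call)
    (hpop : ∀ i ≤ k, (F.pop i).ret < (F.pop (k + 1)).call)
    (hchain : ∀ i ≤ k, (F.push (i + 1)).ret < (F.pop i).call) :
    ¬ Linearizable (F.history V) := by
  rintro ⟨ℓ, hℓ⟩
  have hmem (i : ℕ) (hi : i ≤ k + 1) : F.push i ∈ F.history V ∧ F.pop i ∈ F.history V :=
    have hiV : i ∈ V := hV (by simpa using by omega)
    ⟨push_mem_history hiV, pop_mem_history hiV⟩
  obtain ⟨hpushLast, hpopLast⟩ := hmem (k + 1) le_rfl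
  have hpop_of_push (i : ℕ) (hi : i ≤ k) (hlt : ℓ.idxOf (F.push i) < ℓ.idxOf (F.push (k + 1))) :
      ℓ.idxOf (F.pop i) < ℓ.idxOf (F.push (k + 1)) :=
    have ⟨hpushi, hpopi⟩ := hmem i (by omega)
    hℓ.idxOf_pop_lt_idxOf_push hpushi hpushLast hpopi hpopLast (F.label_push i)
      (F.label_push (k + 1)) (F.label_pop i) (F.label_pop (k + 1)) hlt
      (hℓ.idxOf_lt_idxOf hpopi hpopLast (hpop i hi))
  have hchain_idxOf (i : ℕ) (hi : i ≤ k) : ℓ.idxOf (F.push (i + 1)) < ℓ.idxOf (F.pop i) :=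
    hℓ.idxOf_lt_idxOf (hmem (i + 1) (by omega)).1 (hmem i (by omega)).2 (hchain i hi)
  have hpop_before (i : ℕ) (hi : i ≤ k) : ℓ.idxOf (F.pop i) < ℓ.idxOf (F.push (k + 1)) := by
    induction i with
    | zero => exact hpop_of_push 0 hi (hℓ.idxOf_lt_idxOf (hmem 0 (by omega)).1 hpushLast hpush)
    | succ i ih =>
      exact hpop_of_push (i + 1) hi ((hchain_idxOf i (by omega)).trans (ih (by omega)))
  exact (hchain_idxOf k le_rfl).not_gt (hpop_before k le_rfl)

end OpFamily

theorem range_erase_eq_union {n x : ℕ} (hx : x < n) :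
    (Finset.range n).erase x = Finset.range x ∪ Finset.Ico (x + 1) n := by
  ext i
  simp only [Finset.mem_erase, Finset.mem_range, Finset.mem_union, Finset.mem_Ico]
  omega

/-- The operations of the counterexample on the values `0, …, k + 1`. The call and return
times realise exactly the precedences (written `<`) `push 0 < push (k + 1)`, `push i < pop j` for
`i ≤ j + 1`, and `pop i < pop (k + 1)` for `i ≤ k`. The values beyond `k + 1` are not used. -/
noncomputable def chainFamily (k : ℕ) : OpFamily where
  push i :=
    { label := Label.push i
      call := if i = k + 1 then 2 else 0
      ret := 2 * i + 1
      call_lt_ret := by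
        split_ifs with hi
        · subst hi
          push_cast
          linarith [k.cast_nonneg (α := ℝ)]
        · positivity }
  pop i :=
    { label := Label.pop (some i)
      call := 2 * i + 4
      ret := if i ≤ k then 2 * k + 5 else 2 * i + 5
      call_lt_ret := by
        split_ifs with hi
        · have : (i : ℝ) ≤ k := by exact_mod_cast hi
          linarith
        · linarith }
  label_push _ := rfl
  label_pop _ := rfl

namespace chainFamily

open Finset

variable {k i : ℕ}

theorem push_call_of_ne (hi : i ≠ k + 1) : ((chainFamily k).push i).call = 0 := if_neg hi

theorem push_call_last : ((chainFamily k).push (k + 1)).call = 2 := if_pos rfl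

theorem push_ret : ((chainFamily k).push i).ret = 2 * i + 1 := rfl

theorem pop_call : ((chainFamily k).pop i).call = 2 * i + 4 := rfl

theorem pop_ret_of_le (hi : i ≤ k) : ((chainFamily k).pop i).ret = 2 * k + 5 := if_pos hi

theorem push_call_le : ((chainFamily k).push i).call ≤ 2 := by
  rcases eq_or_ne i (k + 1) with rfl | hi
  · exact push_call_last.le
  · simp [push_call_of_ne hi]

theorem le_pop_ret : 2 * k + 5 ≤ ((chainFamily k).pop i).ret := by
  rcases le_or_gt i k with hi | hi
  · exact (pop_ret_of_le hi).ge
  · have : (k : ℝ) ≤ i := by exact_mod_cast hi.le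
    simp only [chainFamily, hi.not_ge, if_false]
    linarith

theorem not_linearizable : ¬ Linearizable ((chainFamily k).history (range (k + 2))) := by
  refine OpFamily.not_linearizable_history_of_chain Subset.rfl ?_ (fun i hi => ?_) fun i _ => ?_
  · norm_num [push_ret, push_call_last]
  · rw [pop_ret_of_le hi, pop_call]
    push_cast
    linarith
  · rw [push_ret, pop_call]
    push_cast
    linarith

theorem not_push_ret_lt_push_call {a b : ℕ} (hab : a ≠ 0 ∨ b ≠ k + 1) :
    ¬ ((chainFamily k).push a).ret < ((chainFamily k).push b).call := by
  rw [not_lt]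
  rcases eq_or_ne b (k + 1) with rfl | hb
  · have ha : a ≠ 0 := hab.resolve_right (· rfl)
    have : (1 : ℝ) ≤ a := by exact_mod_cast Nat.one_le_iff_ne_zero.mpr ha
    rw [push_call_last, push_ret]
    linarith
  · rw [push_call_of_ne hb, push_ret]
    positivity

theorem not_push_ret_lt_pop_call {a b : ℕ} (hab : b + 2 ≤ a) :
    ¬ ((chainFamily k).push a).ret < ((chainFamily k).pop b).call := by
  have : (b : ℝ) + 2 ≤ a := by exact_mod_cast hab
  rw [push_ret, pop_call]
  linarith

theorem not_pop_ret_lt_push_call (a b : ℕ) :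
    ¬ ((chainFamily k).pop a).ret < ((chainFamily k).push b).call := by
  linarith [le_pop_ret (k := k) (i := a), push_call_le (k := k) (i := b), k.cast_nonneg (α := ℝ)]

theorem not_pop_ret_lt_pop_call (a : ℕ) {b : ℕ} (hb : b ≤ k) :
    ¬ ((chainFamily k).pop a).ret < ((chainFamily k).pop b).call := by
  have : (b : ℝ) ≤ k := by exact_mod_cast hb
  rw [pop_call]
  linarith [le_pop_ret (k := k) (i := a)]

theorem linearizable_of_zero_notMem_or_last_notMem {V : Finset ℕ} (hVk : V ⊆ range (k + 2))
    (hV : 0 ∉ V ∨ k + 1 ∉ V) : Linearizable ((chainFamily k).history V) := by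
  refine ⟨(chainFamily k).nested (V.sort (· ≥ ·)), ?_⟩
  have hsorted := V.sortedGT_sort.pairwise
  have hlin := OpFamily.isLinearization_nested (F := chainFamily k) (V.sort_nodup (· ≥ ·))
    (hsorted.imp_of_mem fun ha hb _ => ?_) (hsorted.imp_of_mem fun ha _ _ => ?_)
    fun a _ b _ => not_pop_ret_lt_push_call b a
  · rwa [V.sort_toFinset] at hlin
  · exact not_push_ret_lt_push_call (hV.imp (ne_of_mem_of_not_mem ((mem_sort _).mp hb))
      (ne_of_mem_of_not_mem ((mem_sort _).mp ha)))
  · have := mem_range.mp (hVk ((mem_sort _).mp ha))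
    exact not_pop_ret_lt_pop_call _ (by omega)

theorem linearizable_erase {x : ℕ} (hx : x < k + 2) :
    Linearizable ((chainFamily k).history ((range (k + 2)).erase x)) := by
  rw [range_erase_eq_union hx]
  refine OpFamily.linearizable_history_union ?_ ?_ ?_ ?_
  · exact linearizable_of_zero_notMem_or_last_notMem (by simpa using hx.le)
      (Or.inr (by simpa using by omega))
  · exact linearizable_of_zero_notMem_or_last_notMem (by intro i; simp) (Or.inl (by simp))
  · refine disjoint_left.mpr fun i => ?_
    simp only [mem_range, mem_Ico]
    omega
  · intro o₁ ho₁ o₂ ho₂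
    obtain ⟨i, hi, ho₁⟩ := OpFamily.mem_history.mp ho₁
    obtain ⟨j, hj, ho₂⟩ := OpFamily.mem_history.mp ho₂
    rw [mem_range] at hi
    rw [mem_Ico] at hj
    rcases ho₁ with rfl | rfl <;> rcases ho₂ with rfl | rfl
    · exact not_push_ret_lt_push_call (Or.inr (by omega))
    · exact not_pop_ret_lt_push_call j i
    · exact not_push_ret_lt_pop_call (by omega)
    · exact not_pop_ret_lt_pop_call j (by omega)

end chainFamily

/-- No small model property: for every `n ≥ 2` there is a matched differentiated
history with exactly `n` values and no pop(⊥) that is not linearizable, yet removing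
(both operations on) any one of its values yields a linearizable history. -/
theorem no_small_model_property (n : ℕ) (hn : 2 ≤ n) :
    ∃ h : Finset Op, Differentiated h ∧ HMatched h ∧ NoPopEmpty h ∧
      (hVals h).ncard = n ∧
      ¬ Linearizable h ∧
      ∀ x ∈ hVals h, Linearizable (removeVal h x) := by
  obtain ⟨k, rfl⟩ := Nat.exists_eq_add_of_le' hn
  refine ⟨(chainFamily k).history (Finset.range (k + 2)), OpFamily.differentiated_history,
    OpFamily.hMatched_history, OpFamily.noPopEmpty_history, ?_, chainFamily.not_linearizable, ?_⟩
  · rw [OpFamily.hVals_history, Set.ncard_coe_finset, Finset.card_range]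
  · intro x hx
    rw [OpFamily.hVals_history, Finset.mem_coe, Finset.mem_range] at hx
    rw [OpFamily.removeVal_history]
    exact chainFamily.linearizable_erase hx
end

section
/- If a differentiated history h is linearizable, then for any linearization ℓ of h and any set S of values, the subsequence of ℓ consisting of the labels whose value lies in S is itself in the sequential stack specification Stack; in particular, the projection h|S is linearizable. -/
attribute [local instance] Classical.propDecidable

/-!
Induct on the derivation of a sequence in `Stack`. A predicate on values keeps or drops all labels
of a value together, so the two parts around an inserted label stay disjoint, matched, or free of
pop(⊥) when they are filtered. Hence each rule either applies again to the filtered parts, if its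
value is kept, or leaves the filtered sequence unchanged, if its value is dropped.
-/

theorem seqVals_mono {u v : List Label} (huv : u ⊆ v) : seqVals u ⊆ seqVals v :=
  fun _ => Or.imp (@huv _) (@huv _)

theorem seqVals_filter_subset (p : Label → Bool) (u : List Label) :
    seqVals (u.filter p) ⊆ seqVals u :=
  seqVals_mono (List.filter_subset_self u)

theorem seqMatched.filter {u : List Label} (hu : seqMatched u) {p : Label → Bool}
    (hp : ∀ x, p (.push x) → p (.pop (some x))) : seqMatched (u.filter p) := by
  intro x hx
  obtain ⟨hxu, hpx⟩ := List.mem_filter.1 hx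
  exact List.mem_filter.2 ⟨hu x hxu, hp x hpx⟩

theorem Stack.filter_val {l : List Label} (hl : Stack l) (p : Option ℕ → Bool) :
    Stack (l.filter fun a => p a.val) := by
  have vals_subset := seqVals_filter_subset fun a => p a.val
  have matched {u : List Label} (hu : seqMatched u) : seqMatched (u.filter fun a => p a.val) :=
    hu.filter fun _ => id
  induction hl with
  | empty => exact .empty
  | pushPop x u v _ hdisj hu hxu hxv ih =>
    rw [List.filter_append] at ih
    cases hx : p (some x) with
    | false => simpa [Label.val, hx] using ih
    | true =>
      simpa [Label.val, hx] using Stack.pushPop x _ _ ih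
        (hdisj.mono (vals_subset u) (vals_subset v)) (matched hu)
        (mt (@vals_subset u x) hxu) (mt (@vals_subset v x) hxv)
  | push x u v _ hdisj hv hxu hxv ih =>
    rw [List.filter_append] at ih
    cases hx : p (some x) with
    | false => simpa [Label.val, hx] using ih
    | true =>
      simpa [Label.val, hx] using Stack.push x _ _ ih
        (hdisj.mono (vals_subset u) (vals_subset v)) (mt List.mem_of_mem_filter hv)
        (mt (@vals_subset u x) hxu) (mt (@vals_subset v x) hxv)
  | popEmpty u v _ hu ih =>
    rw [List.filter_append] at ih
    cases hbot : p none with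
    | false => simpa [Label.val, hbot] using ih
    | true => simpa [Label.val, hbot] using Stack.popEmpty _ _ ih (matched hu)

theorem IsLinearization.filter_val {h : Finset Op} {ℓ : List Op} (hlin : IsLinearization h ℓ)
    (S : Set (Option ℕ)) :
    IsLinearization (projOpt h S) (ℓ.filter fun o => decide (o.val ∈ S)) := by
  obtain ⟨hnodup, hmem, hprec, hstack⟩ := hlin
  refine ⟨hnodup.filter _, fun o => ?_, hprec.filter _, ?_⟩
  · simp [projOpt, hmem]
  · have hfilter := hstack.filter_val fun v => decide (v ∈ S)
    rwa [List.filter_map] at hfilter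

/-- Projection of a linearization: for any linearization `ℓ` of a differentiated
history `h` and any set `S` of values, the subsequence of labels of `ℓ` with value in
`S` is in `Stack`; in particular the projection `h|S` is linearizable. -/
theorem linearization_projection (h : Finset Op) (hdiff : Differentiated h)
    (ℓ : List Op) (hlin : IsLinearization h ℓ) (S : Set (Option ℕ)) :
    Stack ((ℓ.map Op.label).filter (fun lbl => decide (Label.val lbl ∈ S))) ∧
    Linearizable (projOpt h S) := by
  have hstack : Stack (ℓ.map Op.label) := hlin.2.2.2
  exact ⟨hstack.filter_val fun v => decide (v ∈ S), _, hlin.filter_val S⟩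
end
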